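/- arXiv:1111.5864 — 2 statements merged into one kernel-verified Lean document; each statement's English description precedes it below -/
import Mathlib

section
/- Let Cₙ be the cycle of order n ≥ 3 and let σ : V(G₁) → V(G₂) be a bijection (permutation) between two disjoint copies G₁, G₂ of Cₙ. Then 2 ≤ dim(C(Cₙ, σ)) ≤ n − 1. -/
/-- The functigraph `C(G, f)`: two disjoint copies of `G` (as `Sum.inl`/`Sum.inr`),
with an edge from each `Sum.inl u` to `Sum.inr (f u)`. -/
def functigraph {V : Type*} (G : SimpleGraph V) (f : V → V) : SimpleGraph (V ⊕ V) :=
  SimpleGraph.fromRel (fun x y =>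
    match x, y with
    | Sum.inl a, Sum.inl b => G.Adj a b
    | Sum.inr a, Sum.inr b => G.Adj a b
    | Sum.inl a, Sum.inr b => f a = b
    | Sum.inr _, Sum.inl _ => False)

/-- `S` is a resolving set of `H`: every pair of distinct vertices is resolved by some `w ∈ S`. -/
def IsResolving {V : Type*} (H : SimpleGraph V) (S : Set V) : Prop :=
  ∀ x y : V, x ≠ y → ∃ w ∈ S, H.dist x w ≠ H.dist y w

/-- The metric dimension of `H`: minimum cardinality of a (finite) resolving set. -/
noncomputable def metricDim {V : Type*} (H : SimpleGraph V) : ℕ :=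
  sInf {k | ∃ S : Set V, IsResolving H S ∧ S.Finite ∧ S.ncard = k}

/-- The cycle graph on `ZMod n` (for `n ≥ 3`): `i` is adjacent to `i ± 1`. -/
def cycGraph (n : ℕ) : SimpleGraph (ZMod n) :=
  SimpleGraph.fromRel (fun i j => j = i + 1)

/-- The closed neighborhood `N[S]` of a set `S` in `H`. -/
def closedNbhd {V : Type*} (H : SimpleGraph V) (S : Set V) : Set V :=
  S ∪ {x | ∃ s ∈ S, H.Adj x s}

lemma fg_ll {n : ℕ} (σ : ZMod n → ZMod n) (a b : ZMod n) :
    (functigraph (cycGraph n) σ).Adj (Sum.inl a) (Sum.inl b) ↔ a ≠ b ∧ (b = a + 1 ∨ a = b + 1) := by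
  simp only [functigraph, cycGraph, SimpleGraph.fromRel_adj]
  grind

lemma fg_rr {n : ℕ} (σ : ZMod n → ZMod n) (a b : ZMod n) :
    (functigraph (cycGraph n) σ).Adj (Sum.inr a) (Sum.inr b) ↔ a ≠ b ∧ (b = a + 1 ∨ a = b + 1) := by
  simp only [functigraph, cycGraph, SimpleGraph.fromRel_adj]
  grind

lemma fg_rl {n : ℕ} (σ : ZMod n → ZMod n) (a b : ZMod n) :
    (functigraph (cycGraph n) σ).Adj (Sum.inr a) (Sum.inl b) ↔ σ b = a := by
  simp [functigraph, SimpleGraph.fromRel_adj]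

lemma fg_reach {n : ℕ} [NeZero n] (σ : ZMod n → ZMod n) (hσ : Function.Surjective σ)
    (h1 : (1 : ZMod n) ≠ 0) (x y) : (functigraph (cycGraph n) σ).Reachable x y := by
  have key : ∀ k : ℕ, (functigraph (cycGraph n) σ).Reachable (Sum.inl 0) (Sum.inl (k : ZMod n)) := by
    intro k
    induction k with
    | zero => simp
    | succ k ih =>
      refine ih.trans (SimpleGraph.Adj.reachable ?_)
      rw [fg_ll]
      refine ⟨?_, Or.inl (by push_cast; rfl)⟩
      intro h
      push_cast at h
      exact h1 (left_eq_add.mp h)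
  have key2 : ∀ x, (functigraph (cycGraph n) σ).Reachable (Sum.inl 0) x := by
    have h : ∀ a : ZMod n, (functigraph (cycGraph n) σ).Reachable (Sum.inl 0) (Sum.inl a) := by
      intro a
      have := key a.val
      rwa [ZMod.natCast_zmod_val] at this
    rintro (a | a)
    · exact h a
    · obtain ⟨u, rfl⟩ := hσ a
      exact (h u).trans (((fg_rl σ _ _).2 rfl).reachable.symm)
  exact (key2 x).symm.trans (key2 y)

theorem stmt8 (n : ℕ) (hn : 3 <= n) (σ : ZMod n -> ZMod n)
    (hσ : Function.Bijective σ) :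
    2 <= metricDim (functigraph (cycGraph n) σ) ∧
    metricDim (functigraph (cycGraph n) σ) <= n - 1 := by
  have : NeZero n := ⟨by omega⟩
  have h1 : (1 : ZMod n) ≠ 0 := by
    intro h
    have h' : ((1 : ℕ) : ZMod n) = 0 := by simpa using h
    rw [ZMod.natCast_eq_zero_iff] at h'
    have := Nat.le_of_dvd (by omega) h'
    omega
  have h2 : (2 : ZMod n) ≠ 0 := by
    intro h
    have h' : ((2 : ℕ) : ZMod n) = 0 := by simpa using h
    rw [ZMod.natCast_eq_zero_iff] at h'
    have := Nat.le_of_dvd (by omega) h'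
    omega
  have hr := fg_reach σ hσ.2 h1
  set H := functigraph (cycGraph n) σ with hH
  have hp : ∀ a : ZMod n, a + 1 ≠ a := fun a h => h1 (by linear_combination h)
  have hm : ∀ a : ZMod n, a - 1 ≠ a := fun a h => h1 (by linear_combination -h)
  have hpm : ∀ a : ZMod n, a + 1 ≠ a - 1 := fun a h => h2 (by linear_combination h)
  have hmem : n - 1 ∈ {k | ∃ S : Set (ZMod n ⊕ ZMod n), IsResolving H S ∧ S.Finite ∧ S.ncard = k} := by
    refine ⟨Sum.inl '' {a : ZMod n | a ≠ 0}, ?_, Set.toFinite _, ?_⟩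
    · intro x y hxy
      by_contra hc
      push Not at hc
      have hc' : ∀ u : ZMod n, u ≠ 0 → H.dist x (Sum.inl u) = H.dist y (Sum.inl u) :=
        fun u hu => hc _ ⟨u, hu, rfl⟩
      have hadj : ∀ u : ZMod n, u ≠ 0 → (H.Adj x (Sum.inl u) ↔ H.Adj y (Sum.inl u)) := by
        intro u hu
        rw [← SimpleGraph.dist_eq_one_iff_adj, ← SimpleGraph.dist_eq_one_iff_adj, hc' u hu]
      have heq : ∀ u : ZMod n, u ≠ 0 → (x = Sum.inl u ↔ y = Sum.inl u) := by
        intro u hu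
        rw [← (hr x _).dist_eq_zero_iff, ← (hr y _).dist_eq_zero_iff, hc' u hu]
      have hmix : ∀ a : ZMod n, ¬ ∀ u : ZMod n, u ≠ 0 →
          (H.Adj (Sum.inl 0) (Sum.inl u) ↔ H.Adj (Sum.inr a) (Sum.inl u)) := by
        intro a h
        have e1 := (h (0 + 1) (hp 0)).1 ((fg_ll σ _ _).2 ⟨(hp 0).symm, Or.inl rfl⟩)
        have e2 := (h (0 - 1) (hm 0)).1 ((fg_ll σ _ _).2 ⟨(hm 0).symm, Or.inr (by ring)⟩)
        rw [fg_rl] at e1 e2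
        exact hpm 0 (hσ.1 (e1.trans e2.symm))
      rcases x with a | a <;> rcases y with b | b
      · by_cases ha : a = 0
        · by_cases hb : b = 0
          · exact hxy (by rw [ha, hb])
          · exact hxy ((heq b hb).2 rfl)
        · exact hxy ((heq a ha).1 rfl).symm
      · by_cases ha : a = 0
        · subst ha; exact hmix b hadj
        · exact hxy ((heq a ha).1 rfl).symm
      · by_cases hb : b = 0
        · subst hb; exact hmix a (fun u hu => (hadj u hu).symm)
        · exact hxy ((heq b hb).2 rfl)
      · obtain ⟨u, rfl⟩ := hσ.2 a
        obtain ⟨v, rfl⟩ := hσ.2 b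
        by_cases hu : u = 0
        · by_cases hv : v = 0
          · exact hxy (by rw [hu, hv])
          · have := (fg_rl σ _ _).1 ((hadj v hv).2 ((fg_rl σ _ _).2 rfl))
            exact hxy (by rw [this])
        · have := (fg_rl σ _ _).1 ((hadj u hu).1 ((fg_rl σ _ _).2 rfl))
          exact hxy (by rw [this])
    · rw [Set.ncard_image_of_injective _ Sum.inl_injective]
      have : {a : ZMod n | a ≠ 0} = ({0} : Set (ZMod n))ᶜ := rfl
      rw [this, Set.ncard_compl, Set.ncard_singleton, Nat.card_zmod]
  refine ⟨?_, Nat.sInf_le hmem⟩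
  obtain ⟨S, hS, hfin, hcard⟩ := Nat.sInf_mem ⟨_, hmem⟩
  change 2 ≤ sInf _
  rw [← hcard]
  by_contra hlt
  have hle : S.ncard ≤ 1 := by omega
  have hsub := (Set.ncard_le_one hfin).1 hle
  obtain ⟨w, hw, -⟩ := hS (Sum.inl 0) (Sum.inr 0) (by simp)
  have hnb : ∃ p q, p ≠ q ∧ H.Adj p w ∧ H.Adj q w := by
    rcases w with a | a
    · exact ⟨Sum.inl (a + 1), Sum.inl (a - 1), by simpa using hpm a,
        (fg_ll σ _ _).2 ⟨hp a, Or.inr rfl⟩, (fg_ll σ _ _).2 ⟨hm a, Or.inl (by ring)⟩⟩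
    · exact ⟨Sum.inr (a + 1), Sum.inr (a - 1), by simpa using hpm a,
        (fg_rr σ _ _).2 ⟨hp a, Or.inr rfl⟩, (fg_rr σ _ _).2 ⟨hm a, Or.inl (by ring)⟩⟩
  obtain ⟨p, q, hpq, hpw, hqw⟩ := hnb
  obtain ⟨w', hw', hd⟩ := hS p q hpq
  obtain rfl := hsub w hw w' hw'
  rw [SimpleGraph.dist_eq_one_iff_adj.2 hpw, SimpleGraph.dist_eq_one_iff_adj.2 hqw] at hd
  exact hd rfl
end

section
/- Let Cₙ be the cycle of order n ≥ 3, and let f : V(G₁) → V(G₂) be a function between two disjoint copies G₁, G₂ of Cₙ whose image has size s = |f(V(G₁))| with 1 < s < n. Then 2 ≤ dim(C(Cₙ, f)) ≤ 2(n − 1) − s. -/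
theorem fg_adj_ll {V : Type*} (G : SimpleGraph V) (f : V → V) (a b : V) :
    (functigraph G f).Adj (Sum.inl a) (Sum.inl b) ↔ G.Adj a b := by
  simp only [functigraph, SimpleGraph.fromRel_adj]
  constructor
  · rintro ⟨_, h | h⟩
    · exact h
    · exact h.symm
  · intro h
    exact ⟨fun e => h.ne (Sum.inl.inj e), Or.inl h⟩

theorem fg_adj_rr {V : Type*} (G : SimpleGraph V) (f : V → V) (a b : V) :
    (functigraph G f).Adj (Sum.inr a) (Sum.inr b) ↔ G.Adj a b := by
  simp only [functigraph, SimpleGraph.fromRel_adj]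
  constructor
  · rintro ⟨_, h | h⟩
    · exact h
    · exact h.symm
  · intro h
    exact ⟨fun e => h.ne (Sum.inr.inj e), Or.inl h⟩

theorem fg_adj_lr {V : Type*} (G : SimpleGraph V) (f : V → V) (a b : V) :
    (functigraph G f).Adj (Sum.inl a) (Sum.inr b) ↔ f a = b := by
  simp [functigraph, SimpleGraph.fromRel_adj]

theorem fg_adj_rl {V : Type*} (G : SimpleGraph V) (f : V → V) (a b : V) :
    (functigraph G f).Adj (Sum.inr b) (Sum.inl a) ↔ f a = b := by
  rw [SimpleGraph.adj_comm, fg_adj_lr]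

theorem zm_small (n : ℕ) (hn : 3 ≤ n) : (1 : ZMod n) ≠ 0 ∧ (2 : ZMod n) ≠ 0 := by
  constructor
  · intro h
    have : ((1 : ℕ) : ZMod n) = 0 := by exact_mod_cast h
    rw [ZMod.natCast_eq_zero_iff] at this
    have := Nat.le_of_dvd (by norm_num) this
    omega
  · intro h
    have : ((2 : ℕ) : ZMod n) = 0 := by exact_mod_cast h
    rw [ZMod.natCast_eq_zero_iff] at this
    have := Nat.le_of_dvd (by norm_num) this
    omega

theorem cyc_adj (n : ℕ) (hn : 3 ≤ n) (a b : ZMod n) :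
    (cycGraph n).Adj a b ↔ (b = a + 1 ∨ b = a - 1) := by
  obtain ⟨h1, _⟩ := zm_small n hn
  simp only [cycGraph, SimpleGraph.fromRel_adj]
  constructor
  · rintro ⟨_, h | h⟩
    · exact Or.inl h
    · right; rw [h]; ring
  · rintro (h | h)
    · refine ⟨?_, Or.inl h⟩
      rintro rfl
      exact h1 (by simpa using h)
    · refine ⟨?_, Or.inr (by rw [h]; ring)⟩
      rintro rfl
      exact h1 (by linear_combination h)

theorem cyc_reach (n : ℕ) (hn : 3 ≤ n) (a b : ZMod n) : (cycGraph n).Reachable a b := by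
  have : NeZero n := ⟨by omega⟩
  have key : ∀ k : ℕ, (cycGraph n).Reachable a (a + (k : ZMod n)) := by
    intro k
    induction k with
    | zero => simp
    | succ k ih =>
      refine ih.trans (SimpleGraph.Adj.reachable ?_)
      rw [cyc_adj n hn]
      left; push_cast; ring
  have := key (b - a).val
  rw [ZMod.natCast_zmod_val] at this
  simpa using this

theorem fg_conn (n : ℕ) (hn : 3 ≤ n) (f : ZMod n → ZMod n) :
    (functigraph (cycGraph n) f).Connected := by
  have hr : ∀ a b, (functigraph (cycGraph n) f).Reachable (Sum.inr a) (Sum.inr b) := by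
    intro a b
    let φ : cycGraph n →g functigraph (cycGraph n) f :=
      ⟨Sum.inr, fun h => (fg_adj_rr _ _ _ _).2 h⟩
    exact (cyc_reach n hn a b).map φ
  have hl : ∀ a, (functigraph (cycGraph n) f).Reachable (Sum.inl a) (Sum.inr (f a)) :=
    fun a => SimpleGraph.Adj.reachable ((fg_adj_lr _ _ _ _).2 rfl)
  have h0 : ∀ x, (functigraph (cycGraph n) f).Reachable x (Sum.inr 0) := by
    rintro (a | a)
    · exact (hl a).trans (hr _ _)
    · exact hr _ _
  have : Nonempty (ZMod n ⊕ ZMod n) := ⟨Sum.inr 0⟩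
  exact ⟨fun x y => (h0 x).trans (h0 y).symm⟩

theorem choice_lem (n : ℕ) (hn : 3 ≤ n) (f : ZMod n → ZMod n)
    (hinj : ∃ a b, a ≠ b ∧ f a = f b) (hsur : ∃ v, v ∉ Set.range f)
    (hnc : ∃ a b, f a ≠ f b) :
    ∃ u0 v0, (∃ u1, u1 ≠ u0 ∧ f u1 = f u0) ∧ v0 ∉ Set.range f ∧
      ∀ u, (∃ u', u' ≠ u0 ∧ f u' = f u ∧ u' ≠ u0 + 1 ∧ u' ≠ u0 - 1) ∨
        f (u0 + 1) ≠ f u ∨ f (u0 - 1) ≠ f u ∨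
        ∃ v, v ∉ Set.range f ∧ v ≠ v0 ∧ (v = f u + 1 ∨ v = f u - 1) := by
  obtain ⟨h1, h2⟩ := zm_small n hn
  obtain ⟨a, b, hab, hfab⟩ := hinj
  obtain ⟨v0, hv0⟩ := hsur
  have key : ∀ c, (∃ u1, u1 ≠ c ∧ f u1 = f c) →
      (f (c + 1) = f (c - 1) ∧ ∀ u', f u' = f (c + 1) → u' = c ∨ u' = c + 1 ∨ u' = c - 1) ∨ ∃ u0 v0, (∃ u1, u1 ≠ u0 ∧ f u1 = f u0) ∧ v0 ∉ Set.range f ∧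
      ∀ u, (∃ u', u' ≠ u0 ∧ f u' = f u ∧ u' ≠ u0 + 1 ∧ u' ≠ u0 - 1) ∨
        f (u0 + 1) ≠ f u ∨ f (u0 - 1) ≠ f u ∨
        ∃ v, v ∉ Set.range f ∧ v ≠ v0 ∧ (v = f u + 1 ∨ v = f u - 1) := by
    intro c hc
    by_cases hB : (f (c + 1) = f (c - 1) ∧ ∀ u', f u' = f (c + 1) → u' = c ∨ u' = c + 1 ∨ u' = c - 1)
    · exact Or.inl hB
    · right
      refine ⟨c, v0, hc, hv0, ?_⟩
      intro u
      by_contra hcon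
      push Not at hcon
      obtain ⟨q1, q2, q3, -⟩ := hcon
      apply hB
      refine ⟨q2.trans q3.symm, ?_⟩
      intro u' hu'
      by_contra hc'
      push Not at hc'
      exact hc'.2.2 (q1 u' hc'.1 (hu'.trans q2) hc'.2.1)
  have hpm : a + 1 ≠ a - 1 := by
    intro h
    apply h2
    linear_combination h
  rcases key a ⟨b, hab.symm, hfab.symm⟩ with ⟨e1, F1⟩ | h
  swap; · exact h
  rcases key (a + 1) ⟨a - 1, hpm.symm, e1.symm⟩ with ⟨e2, F2⟩ | h
  swap; · exact h
  rcases key (a - 1) ⟨a + 1, hpm, e1⟩ with ⟨e3, F3⟩ | h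
  swap; · exact h
  have r1 : a + 1 - 1 = a := by ring
  have r2 : a - 1 + 1 = a := by ring
  rw [r1] at e2 F2
  rw [r2] at e3 F3
  rcases F2 (a - 1 - 1) (e3.symm.trans e2.symm) with h | h | h
  · -- a - 2 = a + 1
    exfalso
    have h3 : (3 : ZMod n) = 0 := by linear_combination -h
    have h3' : ((3 : ℕ) : ZMod n) = 0 := by exact_mod_cast h3
    rw [ZMod.natCast_eq_zero_iff] at h3'
    have hle := Nat.le_of_dvd (by norm_num) h3'
    obtain rfl : n = 3 := by omega
    have hall : ∀ a x : ZMod 3, x = a ∨ x = a + 1 ∨ x = a - 1 := by decide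
    have e4 : f a = f (a + 1) := by rw [← h]; exact e3
    obtain ⟨x, y, hxy⟩ := hnc
    have hx : ∀ x, f x = f a := by
      intro x
      rcases hall a x with rfl | rfl | rfl
      · rfl
      · exact e4.symm
      · exact e1.symm.trans e4.symm
    exact hxy ((hx x).trans (hx y).symm)
  · have h4 : (4 : ZMod n) = 0 := by linear_combination -h
    have h4' : ((4 : ℕ) : ZMod n) = 0 := by exact_mod_cast h4
    rw [ZMod.natCast_eq_zero_iff] at h4'
    have hle := Nat.le_of_dvd (by norm_num) h4'
    obtain rfl : n = 4 := by
      have : n ≠ 3 := by rintro rfl; omega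
      omega
    have hall : ∀ a x : ZMod 4, x = a ∨ x = a + 1 ∨ x = a - 1 ∨ x = a + 1 + 1 := by decide
    have hx : ∀ x, f x = f a ∨ f x = f (a + 1) := by
      intro x
      rcases hall a x with rfl | rfl | rfl | rfl
      · exact Or.inl rfl
      · exact Or.inr rfl
      · exact Or.inr e1.symm
      · exact Or.inl e2
    have hne : f (a + 1) ≠ f a := by
      intro h
      obtain ⟨x, y, hxy⟩ := hnc
      have hx' : ∀ x, f x = f a := fun x => (hx x).elim id (fun q => q.trans h)
      exact hxy ((hx' x).trans (hx' y).symm)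
    have dec : ∀ y y' : ZMod 4, y ≠ y' → ∃ v w, v ≠ y ∧ v ≠ y' ∧ w ≠ y ∧ w ≠ y' ∧ v ≠ w ∧
      (v = y + 1 ∨ v = y - 1) := by decide
    obtain ⟨v, w, p1, p2, p3, p4, p5, p6⟩ := dec _ _ hne
    have nr : ∀ v, v ≠ f (a + 1) → v ≠ f a → v ∉ Set.range f := by
      rintro v q1 q2 ⟨x, rfl⟩
      rcases hx x with q | q
      · exact q2 q
      · exact q1 q
    refine ⟨a, w, ⟨b, hab.symm, hfab.symm⟩, nr w p3 p4, ?_⟩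
    intro u
    by_cases hu : f (a + 1) = f u
    · right; right; right
      exact ⟨v, nr v p1 p2, p5, hu ▸ p6⟩
    · right; left; exact hu
  · exfalso
    apply h2
    linear_combination -h

theorem stmt16 (n : ℕ) (hn : 3 <= n) (f : ZMod n -> ZMod n) (s : ℕ)
    (hs : s = (Set.range f).ncard) (hs1 : 1 < s) (hs2 : s < n) :
    2 <= metricDim (functigraph (cycGraph n) f) ∧
    metricDim (functigraph (cycGraph n) f) <= 2 * (n - 1) - s := by
  have : NeZero n := ⟨by omega⟩
  have hcard : Nat.card (ZMod n) = n := Nat.card_zmod n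
  obtain ⟨h1, h2⟩ := zm_small n hn
  have hconn := fg_conn n hn f
  have hsurF : ∃ v, v ∉ Set.range f := by
    by_contra hcon
    push Not at hcon
    rw [Set.eq_univ_of_forall hcon, Set.ncard_univ, hcard] at hs
    omega
  have hinjF : ∃ a b, a ≠ b ∧ f a = f b := by
    by_contra hcon
    push Not at hcon
    have hi : Function.Injective f := fun a b h => by
      by_contra hab
      exact hcon a b hab h
    have := Finite.surjective_of_injective hi
    obtain ⟨v, hv⟩ := hsurF
    exact hv (this v)
  have hnc : ∃ a b, f a ≠ f b := by
    by_contra hcon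
    push Not at hcon
    have : Set.range f = {f 0} := by
      ext x; constructor
      · rintro ⟨y, rfl⟩; exact hcon y 0
      · rintro rfl; exact ⟨0, rfl⟩
    rw [this, Set.ncard_singleton] at hs
    omega
  obtain ⟨u0, v0, ⟨u1, hu1, hfu1⟩, hv0, hP⟩ := choice_lem n hn f hinjF hsurF hnc
  set H := functigraph (cycGraph n) f with hH
  set S : Set (ZMod n ⊕ ZMod n) := Sum.inl '' {u0}ᶜ ∪ Sum.inr '' ((Set.range f)ᶜ \ {v0}) with hS
  have memL : ∀ u, u ≠ u0 → Sum.inl u ∈ S := fun u hu => Or.inl ⟨u, hu, rfl⟩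
  have memR : ∀ v, v ∉ Set.range f → v ≠ v0 → Sum.inr v ∈ S := fun v hv hv' =>
    Or.inr ⟨v, ⟨hv, hv'⟩, rfl⟩
  -- separation by adjacency and by membership
  have sepA : ∀ x y w, w ∈ S → H.Adj x w → ¬ H.Adj y w → ∃ w ∈ S, H.dist x w ≠ H.dist y w := by
    intro x y w hw hx hy
    refine ⟨w, hw, ?_⟩
    rw [SimpleGraph.dist_eq_one_iff_adj.2 hx]
    intro h
    exact hy (SimpleGraph.dist_eq_one_iff_adj.1 h.symm)
  have sepM : ∀ x y, x ≠ y → x ∈ S → ∃ w ∈ S, H.dist x w ≠ H.dist y w := by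
    intro x y hxy hx
    refine ⟨x, hx, ?_⟩
    rw [SimpleGraph.dist_self]
    intro h
    exact hxy (hconn.dist_eq_zero_iff.1 h.symm).symm
  have symmE : ∀ x y, (∃ w ∈ S, H.dist x w ≠ H.dist y w) → ∃ w ∈ S, H.dist y w ≠ H.dist x w :=
    fun x y ⟨w, hw, h⟩ => ⟨w, hw, h.symm⟩
  have hpre : ∀ y ∈ Set.range f, ∃ u, u ≠ u0 ∧ f u = y := by
    rintro y ⟨u, rfl⟩
    by_cases hu : u = u0
    · exact ⟨u1, hu1, by rw [hu, hfu1]⟩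
    · exact ⟨u, hu, rfl⟩
  have hadd : u0 + 1 ≠ u0 := by simpa using h1
  have hsub : u0 - 1 ≠ u0 := by simpa using h1
  have imgR : ∀ y y', y ≠ y' → y ∈ Set.range f →
      ∃ w ∈ S, H.dist (Sum.inr y) w ≠ H.dist (Sum.inr y') w := by
    intro y y' hne hy
    obtain ⟨u, hu, rfl⟩ := hpre y hy
    refine sepA _ _ (Sum.inl u) (memL u hu) ((fg_adj_rl _ _ _ _).2 rfl) ?_
    rw [fg_adj_rl]; exact hne
  have adjp : H.Adj (Sum.inl u0) (Sum.inl (u0 + 1)) :=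
    (fg_adj_ll _ _ _ _).2 ((cyc_adj n hn _ _).2 (Or.inl rfl))
  have adjm : H.Adj (Sum.inl u0) (Sum.inl (u0 - 1)) :=
    (fg_adj_ll _ _ _ _).2 ((cyc_adj n hn _ _).2 (Or.inr rfl))
  have cross : ∀ y, ∃ w ∈ S, H.dist (Sum.inl u0) w ≠ H.dist (Sum.inr y) w := by
    intro y
    by_cases hy : y ∈ Set.range f
    · obtain ⟨u, rfl⟩ := hy
      rcases hP u with ⟨u', q1, q2, q3, q4⟩ | q | q | ⟨v, q1, q2, q3⟩
      · apply symmE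
        refine sepA _ _ (Sum.inl u') (memL u' q1) ((fg_adj_rl _ _ _ _).2 q2) ?_
        rw [fg_adj_ll, cyc_adj n hn]
        tauto
      · exact sepA _ _ _ (memL _ hadd) adjp (by rw [fg_adj_rl]; exact q)
      · exact sepA _ _ _ (memL _ hsub) adjm (by rw [fg_adj_rl]; exact q)
      · apply symmE
        refine sepA _ _ (Sum.inr v) (memR v q1 q2)
          ((fg_adj_rr _ _ _ _).2 ((cyc_adj n hn _ _).2 q3)) ?_
        rw [fg_adj_lr]
        exact fun h => q1 ⟨_, h⟩
    · refine sepA _ _ _ (memL _ hadd) adjp ?_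
      rw [fg_adj_rl]
      exact fun h => hy ⟨_, h⟩
  have hres : IsResolving H S := by
    rintro (x | x) (y | y) hxy
    · by_cases hx : x = u0
      · apply symmE
        refine sepM _ _ hxy.symm (memL y ?_)
        rintro rfl
        exact hxy (by rw [hx])
      · exact sepM _ _ hxy (memL x hx)
    · by_cases hx : x = u0
      · rw [hx]; exact cross y
      · exact sepM _ _ hxy (memL x hx)
    · apply symmE
      by_cases hy : y = u0
      · rw [hy]; exact cross x
      · exact sepM _ _ hxy.symm (memL y hy)
    · have hne : x ≠ y := fun h => hxy (by rw [h])
      by_cases hx : x ∈ Set.range f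
      · exact imgR x y hne hx
      by_cases hy : y ∈ Set.range f
      · exact symmE _ _ (imgR y x hne.symm hy)
      by_cases hx0 : x = v0
      · apply symmE
        exact sepM _ _ hxy.symm (memR y hy (fun h => hne (hx0.trans h.symm)))
      · exact sepM _ _ hxy (memR x hx hx0)
  have hScard : S.ncard ≤ 2 * (n - 1) - s := by
    have c1 : S.ncard ≤ ({u0}ᶜ : Set (ZMod n)).ncard + ((Set.range f)ᶜ \ {v0}).ncard :=
      (Set.ncard_union_le _ _).trans (Nat.add_le_add (Set.ncard_image_le (Set.toFinite _))
        (Set.ncard_image_le (Set.toFinite _)))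
    have c2 := Set.ncard_add_ncard_compl ({u0} : Set (ZMod n))
    rw [Set.ncard_singleton, hcard] at c2
    have c3 := Set.ncard_add_ncard_compl (Set.range f)
    rw [← hs, hcard] at c3
    have c4 := Set.ncard_sdiff_singleton_add_one (s := (Set.range f)ᶜ) (a := v0) hv0
    omega
  constructor
  · unfold metricDim
    refine le_csInf ⟨S.ncard, S, hres, Set.toFinite _, rfl⟩ ?_
    rintro k ⟨T, hT, -, rfl⟩
    by_contra hlt
    have hle : T.ncard ≤ 1 := by omega
    rw [Set.ncard_le_one_iff] at hle
    have hne01 : (Sum.inl 0 : ZMod n ⊕ ZMod n) ≠ Sum.inr 0 := by simp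
    obtain ⟨w, hw, -⟩ := hT _ _ hne01
    have two : ∃ p q, p ≠ q ∧ H.Adj p w ∧ H.Adj q w := by
      have ne : ∀ a : ZMod n, a + 1 ≠ a - 1 := by
        intro a h
        apply h2
        linear_combination h
      rcases w with a | a
      · refine ⟨Sum.inl (a + 1), Sum.inl (a - 1), fun h => ne a (Sum.inl.inj h), ?_, ?_⟩
        · exact ((fg_adj_ll _ _ _ _).2 ((cyc_adj n hn _ _).2 (Or.inl rfl))).symm
        · exact ((fg_adj_ll _ _ _ _).2 ((cyc_adj n hn _ _).2 (Or.inr rfl))).symm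
      · refine ⟨Sum.inr (a + 1), Sum.inr (a - 1), fun h => ne a (Sum.inr.inj h), ?_, ?_⟩
        · exact ((fg_adj_rr _ _ _ _).2 ((cyc_adj n hn _ _).2 (Or.inl rfl))).symm
        · exact ((fg_adj_rr _ _ _ _).2 ((cyc_adj n hn _ _).2 (Or.inr rfl))).symm
    obtain ⟨p, q, hpq, hp, hq⟩ := two
    obtain ⟨w', hw', hd⟩ := hT p q hpq
    obtain rfl : w' = w := hle hw' hw
    rw [SimpleGraph.dist_eq_one_iff_adj.2 hp, SimpleGraph.dist_eq_one_iff_adj.2 hq] at hd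
    exact hd rfl
  · have hle : metricDim H ≤ S.ncard := by
      unfold metricDim
      exact Nat.sInf_le ⟨S, hres, Set.toFinite _, rfl⟩
    exact hle.trans hScard
end
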